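/- Fix a symmetric positive definite m×m real matrix R with unit diagonal. Then the conditional potential function ψ(u) := log det(L(u) + I) is twice continuously differentiable on ℝ^m and its second partial derivatives satisfy, for all u ∈ ℝ^m and all a, b ∈ {1,…,m}: ∂²ψ/∂u_a∂u_b (u) = K(u)_{aa}(1 − K(u)_{aa}) if a = b, and ∂²ψ/∂u_a∂u_b (u) = −(K(u)_{ab})² if a ≠ b, where K(u) := L(u)(L(u) + I)^{-1}. In other words, the Fisher information matrix of the determinantal point process with respect to the item-wise (quality) parameters u equals the corresponding sub-matrix of the Hessian of ψ. -/

import Mathlib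

/-- The kernel `L(u) = D(u) R D(u)` with `D(u) = diag(e^{u₁/2}, …, e^{u_m/2})`. -/
noncomputable def Lmat {m : ℕ} (R : Matrix (Fin m) (Fin m) ℝ) (u : Fin m → ℝ) :
    Matrix (Fin m) (Fin m) ℝ :=
  Matrix.diagonal (fun i => Real.exp (u i / 2)) * R *
    Matrix.diagonal (fun i => Real.exp (u i / 2))

/-- The conditional potential function `ψ(u) = log det(L(u) + I)`. -/
noncomputable def psi {m : ℕ} (R : Matrix (Fin m) (Fin m) ℝ) (u : Fin m → ℝ) : ℝ :=
  Real.log (Lmat R u + 1).det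

/-- The marginal kernel `K(u) = L(u)(L(u) + I)⁻¹`. -/
noncomputable def Kmat {m : ℕ} (R : Matrix (Fin m) (Fin m) ℝ) (u : Fin m → ℝ) :
    Matrix (Fin m) (Fin m) ℝ :=
  Lmat R u * (Lmat R u + 1)⁻¹

/-!
Along a direction `v`, with `V = diag v`, the kernel `L = D R D` has derivative `(V L + L V) / 2`.
Since `L` commutes with `(L + 1)⁻¹`, Jacobi's formula gives `∂ᵥψ = tr ((L + 1)⁻¹ ∂ᵥL) = tr (K V)`,
so the gradient of `ψ` is the diagonal of `K`. Differentiating once more, with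
`(L + 1)⁻¹ = 1 - K`, gives `∂ᵥK = (V K + K V) / 2 - K V K`, whose diagonal entries are the second
derivatives of `ψ`.
-/

open Matrix
open scoped ContDiff

section MatrixAlgebra

variable {n α : Type*} [Fintype n] [DecidableEq n] [CommRing α]

theorem sum_det_updateRow_eq_trace_adjugate_mul (A B : Matrix n n α) :
    ∑ i, (A.updateRow i (B i)).det = (A.adjugate * B).trace := by
  rw [trace_mul_comm]
  simp only [← cramer_transpose_apply, cramer_eq_adjugate_mulVec, ← adjugate_transpose, trace,
    diag_apply, mul_apply, mulVec, dotProduct, transpose_apply, mul_comm]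

theorem commute_inv_add_one (A : Matrix n n α) : Commute A (A + 1)⁻¹ := by
  simpa using Matrix.Commute.zpow_right ((Commute.refl A).add_right (Commute.one_right A)) (-1)

end MatrixAlgebra

section MatrixCalculus

variable {𝕜 m n : Type*} [NontriviallyNormedField 𝕜]

theorem hasDerivAt_matrix_iff [Finite m] [Finite n] {A : 𝕜 → Matrix m n 𝕜} {A' : Matrix m n 𝕜}
    {t : 𝕜} : HasDerivAt A A' t ↔ ∀ i j, HasDerivAt (fun s => A s i j) (A' i j) t :=
  have := Fintype.ofFinite m
  have := Fintype.ofFinite n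
  hasDerivAt_pi.trans (forall_congr' fun _ => hasDerivAt_pi)

variable [Fintype n] [DecidableEq n] {A : 𝕜 → Matrix n n 𝕜} {A' : Matrix n n 𝕜} {t : 𝕜}

theorem hasDerivAt_matrix_det (hA : HasDerivAt A A' t) :
    HasDerivAt (fun s => (A s).det) ((A t).adjugate * A').trace t := by
  let detRow : ContinuousMultilinearMap 𝕜 (fun _ : n => n → 𝕜) 𝕜 :=
    ⟨(detRowAlternating (R := 𝕜) (n := n)).toMultilinearMap, Continuous.matrix_det continuous_id⟩
  refine ((detRow.hasFDerivAt (A t)).comp_hasDerivAt t hA).congr_deriv ?_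
  rw [← sum_det_updateRow_eq_trace_adjugate_mul]
  exact detRow.linearDeriv_apply (A t) A'

theorem hasDerivAt_log_matrix_det {A : ℝ → Matrix n n ℝ} {A' : Matrix n n ℝ} {t : ℝ}
    (hA : HasDerivAt A A' t) (ht : IsUnit (A t)) :
    HasDerivAt (fun s => Real.log (A s).det) ((A t)⁻¹ * A').trace t := by
  have hdet : (A t).det ≠ 0 := ((isUnit_iff_isUnit_det _).1 ht).ne_zero
  refine ((hasDerivAt_matrix_det hA).log hdet).congr_deriv ?_
  rw [inv_def, Ring.inverse_eq_inv', smul_mul, trace_smul, smul_eq_mul, div_eq_inv_mul]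

open scoped Matrix.Norms.Operator in
theorem hasDerivAt_matrix_inv [CompleteSpace 𝕜] (hA : HasDerivAt A A' t) (ht : IsUnit (A t)) :
    HasDerivAt (fun s => (A s)⁻¹) (-((A t)⁻¹ * A' * (A t)⁻¹)) t := by
  -- Instance search does not identify `Matrix.instUniformSpace` with the uniformity of the norm.
  have : HasSummableGeomSeries (Matrix n n 𝕜) :=
    @instHasSummableGeomSeriesOfCompleteSpace _ _ (FiniteDimensional.complete 𝕜 _)
  obtain ⟨U, hU⟩ := ht
  have hinv := hasFDerivAt_ringInverse (𝕜 := 𝕜) U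
  rw [← Ring.inverse_unit, hU] at hinv
  simp only [nonsing_inv_eq_ringInverse]
  exact hinv.comp_hasDerivAt t hA

end MatrixCalculus

section Kernel

variable {m : ℕ} {R : Matrix (Fin m) (Fin m) ℝ} {u : Fin m → ℝ}

theorem inv_Lmat_add_one_mul_Lmat : (Lmat R u + 1)⁻¹ * Lmat R u = Kmat R u :=
  (commute_inv_add_one (Lmat R u)).eq.symm

theorem inv_Lmat_add_one (hu : IsUnit (Lmat R u + 1)) : (Lmat R u + 1)⁻¹ = 1 - Kmat R u := by
  rw [eq_sub_iff_add_eq', Kmat, ← add_one_mul, mul_nonsing_inv _ ((isUnit_iff_isUnit_det _).1 hu)]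

theorem isSymm_Lmat (hR : R.IsSymm) (u : Fin m → ℝ) : (Lmat R u).IsSymm := by
  simp [Lmat, IsSymm, hR.eq, Matrix.mul_assoc]

theorem isSymm_Kmat (hR : R.IsSymm) (u : Fin m → ℝ) : (Kmat R u).IsSymm := by
  rw [IsSymm, Kmat, transpose_mul, transpose_nonsing_inv, transpose_add, (isSymm_Lmat hR u).eq,
    transpose_one, (commute_inv_add_one _).eq]

theorem isUnit_Lmat_add_one (hR : R.PosSemidef) (u : Fin m → ℝ) : IsUnit (Lmat R u + 1) := by
  have hL : (Lmat R u).PosSemidef := by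
    simpa [Lmat] using hR.mul_mul_conjTranspose_same (diagonal fun i => Real.exp (u i / 2))
  exact (PosDef.posSemidef_add hL .one).isUnit

end Kernel

section Derivatives

open scoped Matrix.Norms.Operator

variable {m : ℕ} {R : Matrix (Fin m) (Fin m) ℝ} {u : Fin m → ℝ}

theorem hasLineDerivAt_Lmat (R : Matrix (Fin m) (Fin m) ℝ) (u v : Fin m → ℝ) :
    HasLineDerivAt ℝ (Lmat R)
      ((1 / 2 : ℝ) • (diagonal v * Lmat R u + Lmat R u * diagonal v)) u v := by
  refine hasDerivAt_matrix_iff.2 fun i j => ?_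
  have hexp (k : Fin m) : HasDerivAt (fun t : ℝ => Real.exp ((u k + t * v k) / 2))
      (Real.exp (u k / 2) * (v k / 2)) 0 := by
    simpa using ((((hasDerivAt_id (0 : ℝ)).mul_const (v k)).const_add (u k)).div_const 2).exp
  simp only [Lmat, mul_diagonal, diagonal_mul, Pi.add_apply, Pi.smul_apply, smul_eq_mul,
    Matrix.smul_apply, Matrix.add_apply]
  refine (((hexp i).mul_const (R i j)).mul (hexp j)).congr_deriv ?_
  simp only [zero_mul, add_zero]
  ring

theorem hasLineDerivAt_psi (hu : IsUnit (Lmat R u + 1)) (v : Fin m → ℝ) :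
    HasLineDerivAt ℝ (psi R) (Kmat R u * diagonal v).trace u v := by
  have hL : HasLineDerivAt ℝ (fun w => Lmat R w + 1) _ u v :=
    HasDerivAt.add_const 1 (hasLineDerivAt_Lmat R u v)
  refine (hasDerivAt_log_matrix_det hL (by simpa using hu)).congr_deriv ?_
  have hVL : ((Lmat R u + 1)⁻¹ * (diagonal v * Lmat R u)).trace =
      (Kmat R u * diagonal v).trace := by
    rw [trace_mul_comm, Matrix.mul_assoc, trace_mul_comm, Kmat]
  have hLV : (Lmat R u + 1)⁻¹ * (Lmat R u * diagonal v) = Kmat R u * diagonal v := by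
    rw [← Matrix.mul_assoc, inv_Lmat_add_one_mul_Lmat]
  rw [zero_smul, add_zero, mul_smul_comm, trace_smul, mul_add, trace_add, hVL, hLV, smul_eq_mul]
  ring

theorem hasLineDerivAt_Kmat (hu : IsUnit (Lmat R u + 1)) (v : Fin m → ℝ) :
    HasLineDerivAt ℝ (Kmat R)
      ((1 / 2 : ℝ) • (diagonal v * Kmat R u + Kmat R u * diagonal v)
        - Kmat R u * diagonal v * Kmat R u) u v := by
  have hL := hasLineDerivAt_Lmat R u v
  have hinv := hasDerivAt_matrix_inv (HasDerivAt.add_const 1 hL) (by simpa using hu)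
  refine (HasDerivAt.mul hL hinv).congr_deriv ?_
  simp only [zero_smul, add_zero]
  set L := Lmat R u
  set K := Kmat R u
  set N := (L + 1)⁻¹
  set L' := (1 / 2 : ℝ) • (diagonal v * L + L * diagonal v)
  have hLN : L * N = K := rfl
  have hNL : N * L = K := inv_Lmat_add_one_mul_Lmat
  have hN : N = 1 - K := inv_Lmat_add_one hu
  calc L' * N + L * -(N * L' * N) = (1 - L * N) * L' * N := by noncomm_ring
    _ = N * L' * N := by rw [hLN, ← hN]
    _ = (1 / 2 : ℝ) • (N * diagonal v * (L * N) + N * L * diagonal v * N) := by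
      simp only [L', Matrix.mul_assoc, mul_smul_comm, smul_mul_assoc, mul_add, add_mul]
    _ = (1 / 2 : ℝ) • ((1 - K) * diagonal v * K + K * diagonal v * (1 - K)) := by
      rw [hLN, hNL, hN]
    _ = (1 / 2 : ℝ) • (diagonal v * K + K * diagonal v) - K * diagonal v * K := by
      simp only [sub_mul, mul_sub, one_mul, mul_one]
      module

theorem contDiff_psi (hunit : ∀ u, IsUnit (Lmat R u + 1)) : ContDiff ℝ ω (psi R) := by
  refine ContDiff.log ?_ fun u => ((isUnit_iff_isUnit_det _).1 (hunit u)).ne_zero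
  simp only [det_apply, Lmat, Matrix.add_apply, mul_diagonal, diagonal_mul]
  fun_prop

theorem fderiv_psi_single (hunit : ∀ u, IsUnit (Lmat R u + 1)) (u : Fin m → ℝ) (b : Fin m) :
    fderiv ℝ (psi R) u (Pi.single b 1) = Kmat R u b b := by
  rw [← ((contDiff_psi hunit).differentiable (by simp) u).lineDeriv_eq_fderiv,
    (hasLineDerivAt_psi (hunit u) _).lineDeriv]
  simp [trace, mul_diagonal, Pi.single_apply]

theorem hasLineDerivAt_Kmat_diag_single (hu : IsUnit (Lmat R u + 1)) (a b : Fin m) :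
    HasLineDerivAt ℝ (fun w => Kmat R w b b)
      ((if a = b then Kmat R u a a else 0) - Kmat R u b a * Kmat R u a b) u (Pi.single a 1) := by
  refine (hasDerivAt_matrix_iff.1 (hasLineDerivAt_Kmat hu (Pi.single a 1)) b b).congr_deriv ?_
  have hKVK : (Kmat R u * diagonal (Pi.single a (1 : ℝ)) * Kmat R u) b b =
      Kmat R u b a * Kmat R u a b := by
    rw [mul_apply]
    simp [mul_diagonal, Pi.single_apply]
  rw [Matrix.sub_apply, hKVK, Matrix.smul_apply, Matrix.add_apply, diagonal_mul, mul_diagonal]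
  rcases eq_or_ne a b with rfl | hab
  · simp only [Pi.single_eq_same, if_true, smul_eq_mul]
    ring
  · simp [hab, hab.symm]

end Derivatives

theorem hessian_psi_eq_fisher_information_general {m : ℕ} {R : Matrix (Fin m) (Fin m) ℝ}
    (hR : R.PosSemidef) :
    ContDiff ℝ ω (psi R) ∧
    ∀ (u : Fin m → ℝ) (a b : Fin m),
      fderiv ℝ (fun v : Fin m → ℝ => fderiv ℝ (psi R) v (Pi.single b 1)) u (Pi.single a 1)
        = if a = b then Kmat R u a a * (1 - Kmat R u a a) else -(Kmat R u a b) ^ 2 := by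
  have hunit := isUnit_Lmat_add_one hR
  have hψ := contDiff_psi hunit
  refine ⟨hψ, fun u a b => ?_⟩
  have hdiff : Differentiable ℝ fun v => fderiv ℝ (psi R) v (Pi.single b 1) :=
    ((hψ.fderiv_right (m := 1) le_top).differentiable one_ne_zero).clm_apply
      (differentiable_const _)
  rw [← (hdiff u).lineDeriv_eq_fderiv]
  simp only [fderiv_psi_single hunit]
  rw [(hasLineDerivAt_Kmat_diag_single (hunit u) a b).lineDeriv,
    (isSymm_Kmat (isHermitian_iff_isSymm.1 hR.isHermitian) u).apply a b]
  rcases eq_or_ne a b with rfl | hab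
  · simp only [if_true]
    ring
  · simp only [if_neg hab]
    ring

theorem hessian_psi_eq_fisher_information (m : ℕ)
    (R : Matrix (Fin m) (Fin m) ℝ) (hsymm : R.IsSymm) (hR : R.PosDef)
    (hdiag : ∀ i, R i i = 1) :
    ContDiff ℝ 2 (psi R) ∧
    ∀ (u : Fin m → ℝ) (a b : Fin m),
      fderiv ℝ (fun v : Fin m → ℝ => fderiv ℝ (psi R) v (Pi.single b 1)) u (Pi.single a 1)
        = if a = b then Kmat R u a a * (1 - Kmat R u a a) else -(Kmat R u a b) ^ 2 :=
  (hessian_psi_eq_fisher_information_general hR.posSemidef).imp_left (·.of_le le_top)
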